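/- Let N ≥ 3, μ₁ < N-2 and -(N-2-μ₁)²/4 ≤ μ₂ < 0, so that τ₊ < 0. Let u ∈ C²(B̄₁ \ {0}) be a positive function satisfying ℒ_{μ₁,μ₂}u ≥ 0 in B₁ \ {0} and u ≥ t₁ on ∂B₁ for some constant t₁ > 0. Then u(x) ≥ t₁ ( |x|^{τ₊} - 1 ) for all x ∈ B₁ \ {0}. -/

import Mathlib

open MeasureTheory Filter Metric Set Topology

noncomputable section

/-- Euclidean space `ℝ^N`. -/
abbrev E (N : ℕ) := EuclideanSpace ℝ (Fin N)

/-- The Laplacian, as the sum of second derivatives in the coordinate directions. -/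
def lap (N : ℕ) (u : E N → ℝ) (x : E N) : ℝ :=
  ∑ i, fderiv ℝ (fun y => fderiv ℝ u y (EuclideanSpace.single i 1)) x (EuclideanSpace.single i 1)

/-- The CKN operator `ℒ_{μ₁,μ₂} u = -Δu + μ₁|x|⁻² x·∇u + μ₂|x|⁻² u`. -/
def ckn (N : ℕ) (μ₁ μ₂ : ℝ) (u : E N → ℝ) (x : E N) : ℝ :=
  -lap N u x + μ₁ / ‖x‖ ^ 2 * fderiv ℝ u x x + μ₂ / ‖x‖ ^ 2 * u x

/-- `τ₊(μ₁,μ₂)`. -/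
def tauPlus (N : ℕ) (μ₁ μ₂ : ℝ) : ℝ :=
  ((2 - (N : ℝ) + μ₁) + Real.sqrt ((2 - (N : ℝ) + μ₁) ^ 2 + 4 * μ₂)) / 2

/-- `τ₋(μ₁,μ₂)`. -/
def tauMinus (N : ℕ) (μ₁ μ₂ : ℝ) : ℝ :=
  ((2 - (N : ℝ) + μ₁) - Real.sqrt ((2 - (N : ℝ) + μ₁) ^ 2 + 4 * μ₂)) / 2

/-- Surface measure of the unit sphere `𝕊^{N-1}` in `ℝ^N`. -/
def sphereArea (N : ℕ) : ℝ := N * (volume (ball (0 : E N) 1)).toReal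

/-- Local β-Hölder continuity of `f` on a set `s`. -/
def LocHolderOn (N : ℕ) (β : ℝ) (f : E N → ℝ) (s : Set (E N)) : Prop :=
  ∀ x ∈ s, ∃ t ∈ nhdsWithin x s, ∃ C : NNReal, HolderOnWith C β.toNNReal f t

/-!
The function `‖x‖ ^ τ₊` solves `ℒ u = 0`, so in `ℒ (‖x‖ ^ τ₊ * w)` the zeroth order term cancels
and quotients by `‖x‖ ^ τ₊` obey a minimum principle, although `ℒ` itself need not. For `ε > 0` the
profile `w = t + ε (log ‖x‖ + ‖x‖ ^ 2 - 1)` makes `‖x‖ ^ τ₊ * (c + w)` a strict subsolution for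
every constant `c`; `w` equals `t` on the unit sphere and is negative near the origin, where a
nonnegative `u` lies above `‖x‖ ^ τ₊ * w`. Comparison on an annulus followed by `ε → 0` gives
`t ‖x‖ ^ τ₊ ≤ u`.
-/

section SecondOrderConditions

variable {V : Type*} [NormedAddCommGroup V] [NormedSpace ℝ V] {f g : V → ℝ} {x : V}

lemma deriv_deriv_nonneg_of_isLocalMin {h : ℝ → ℝ} {t : ℝ} (hmin : IsLocalMin h t)
    (hcont : ContinuousAt h t) : 0 ≤ deriv (deriv h) t := by
  by_contra! hneg
  -- The second derivative test would make `t` a local maximum too, and `h` locally constant.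
  have hmax : IsLocalMax h t := isLocalMax_of_deriv_deriv_neg hneg hmin.deriv_eq_zero hcont
  have hconst : h =ᶠ[𝓝 t] fun _ => h t := by
    filter_upwards [hmin, hmax] with s hle hge using le_antisymm hge hle
  have hzero : deriv (deriv h) t = 0 := by
    simpa only [deriv_const', deriv_const] using hconst.deriv.deriv_eq
  exact hneg.ne hzero

lemma hasDerivAt_comp_line {v : V} {t : ℝ} (hf : DifferentiableAt ℝ f (x + t • v)) :
    HasDerivAt (fun s : ℝ => f (x + s • v)) (fderiv ℝ f (x + t • v) v) t := by
  have hline : HasDerivAt (fun s : ℝ => x + s • v) v t := by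
    simpa only [one_smul, id] using ((hasDerivAt_id t).smul_const v).const_add x
  exact hf.hasFDerivAt.comp_hasDerivAt t hline

lemma eventually_differentiableAt (hf : ContDiffAt ℝ 2 f x) :
    ∀ᶠ y in 𝓝 x, DifferentiableAt ℝ f y :=
  (hf.eventually (by simp)).mono fun _ hy => hy.differentiableAt two_ne_zero

lemma differentiableAt_fderiv_apply (hf : ContDiffAt ℝ 2 f x) (v : V) :
    DifferentiableAt ℝ (fun y => fderiv ℝ f y v) x :=
  ((hf.fderiv_right (m := 1) (by norm_num)).differentiableAt one_ne_zero).clm_apply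
    (differentiableAt_const v)

lemma fderiv_fderiv_apply_nonneg_of_isLocalMin (hf : ContDiffAt ℝ 2 f x) (hmin : IsLocalMin f x)
    (v : V) : 0 ≤ fderiv ℝ (fun y => fderiv ℝ f y v) x v := by
  have hline : Tendsto (fun t : ℝ => x + t • v) (𝓝 0) (𝓝 x) :=
    Continuous.tendsto' (by fun_prop) _ _ (by simp)
  have hderiv : deriv (fun t : ℝ => f (x + t • v)) =ᶠ[𝓝 0] fun t => fderiv ℝ f (x + t • v) v :=
    (hline.eventually (eventually_differentiableAt hf)).mono fun t ht =>
      (hasDerivAt_comp_line ht).deriv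
  have hderiv₂ : deriv (deriv fun t : ℝ => f (x + t • v)) 0 =
      fderiv ℝ (fun y => fderiv ℝ f y v) x v := by
    have hdiff : DifferentiableAt ℝ (fun y => fderiv ℝ f y v) (x + (0 : ℝ) • v) := by
      simpa using differentiableAt_fderiv_apply hf v
    simpa using hderiv.deriv_eq.trans (hasDerivAt_comp_line hdiff).deriv
  rw [← hderiv₂]
  refine deriv_deriv_nonneg_of_isLocalMin ?_ ?_
  · simpa [IsLocalMin, IsMinFilter] using hline.eventually hmin
  · exact ContinuousAt.comp (by simpa using hf.continuousAt) (by fun_prop)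

lemma fderiv_fderiv_sub_apply (hf : ContDiffAt ℝ 2 f x) (hg : ContDiffAt ℝ 2 g x) (v : V) :
    fderiv ℝ (fun y => fderiv ℝ (f - g) y v) x v =
      fderiv ℝ (fun y => fderiv ℝ f y v) x v - fderiv ℝ (fun y => fderiv ℝ g y v) x v := by
  have hfirst : (fun y => fderiv ℝ (f - g) y v) =ᶠ[𝓝 x]
      fun y => fderiv ℝ f y v - fderiv ℝ g y v := by
    filter_upwards [eventually_differentiableAt hf, eventually_differentiableAt hg] with y hfy hgy
    rw [fderiv_sub hfy hgy, sub_apply]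
  rw [hfirst.fderiv_eq, fderiv_fun_sub (differentiableAt_fderiv_apply hf v)
    (differentiableAt_fderiv_apply hg v), sub_apply]

end SecondOrderConditions

section Comparison

variable {N : ℕ} {μ₁ μ₂ : ℝ} {u v : E N → ℝ} {x : E N}

lemma lap_sub (hu : ContDiffAt ℝ 2 u x) (hv : ContDiffAt ℝ 2 v x) :
    lap N (u - v) x = lap N u x - lap N v x := by
  simp only [lap, fderiv_fderiv_sub_apply hu hv, Finset.sum_sub_distrib]

lemma ckn_sub (hu : ContDiffAt ℝ 2 u x) (hv : ContDiffAt ℝ 2 v x) :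
    ckn N μ₁ μ₂ (u - v) x = ckn N μ₁ μ₂ u x - ckn N μ₁ μ₂ v x := by
  simp only [ckn, lap_sub hu hv, Pi.sub_apply, sub_apply,
    fderiv_sub (hu.differentiableAt two_ne_zero) (hv.differentiableAt two_ne_zero)]
  ring

lemma lap_nonneg_of_isLocalMin (hu : ContDiffAt ℝ 2 u x) (hmin : IsLocalMin u x) :
    0 ≤ lap N u x :=
  Finset.sum_nonneg fun _ _ => fderiv_fderiv_apply_nonneg_of_isLocalMin hu hmin _

lemma ckn_nonpos_of_isLocalMin (hu : ContDiffAt ℝ 2 u x) (hmin : IsLocalMin u x) (hx : u x = 0) :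
    ckn N μ₁ μ₂ u x ≤ 0 := by
  simpa [ckn, hmin.fderiv_eq_zero, hx] using lap_nonneg_of_isLocalMin hu hmin

lemma ckn_le_of_touching (hu : ContDiffAt ℝ 2 u x) (hv : ContDiffAt ℝ 2 v x)
    (hle : ∀ᶠ y in 𝓝 x, v y ≤ u y) (heq : v x = u x) :
    ckn N μ₁ μ₂ u x ≤ ckn N μ₁ μ₂ v x := by
  have hmin : IsLocalMin (u - v) x := by
    filter_upwards [hle] with y hy
    simpa [heq] using hy
  have hckn := ckn_nonpos_of_isLocalMin (μ₁ := μ₁) (μ₂ := μ₂) (hu.sub hv) hmin (by simp [heq])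
  exact sub_nonpos.mp ((ckn_sub hu hv).symm.trans_le hckn)

-- At a minimum point of `u / φ - w`, with value `c`, the function `φ * (c + w)` touches `u` from
-- below; unlike `u - φ * w`, this works whatever the sign of `μ₂`.
theorem mul_le_of_ckn_mul_const_add_neg {K : Set (E N)} (hK : IsCompact K) {φ w : E N → ℝ}
    (hu : ContinuousOn u K) (hu₂ : ContDiffOn ℝ 2 u (interior K))
    (hφ : ContinuousOn φ K) (hφ₂ : ContDiffOn ℝ 2 φ (interior K)) (hφpos : ∀ y ∈ K, 0 < φ y)
    (hw : ContinuousOn w K) (hw₂ : ContDiffOn ℝ 2 w (interior K))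
    (hsuper : ∀ y ∈ interior K, 0 ≤ ckn N μ₁ μ₂ u y)
    (hsub : ∀ c < 0, ∀ y ∈ interior K, ckn N μ₁ μ₂ (fun z => φ z * (c + w z)) y < 0)
    (hbdry : ∀ y ∈ frontier K, φ y * w y ≤ u y) (hx : x ∈ K) :
    φ x * w x ≤ u x := by
  have hquot : ContinuousOn (fun y => u y / φ y - w y) K :=
    (hu.div hφ fun y hy => (hφpos y hy).ne').sub hw
  obtain ⟨z, hzK, hz⟩ := hK.exists_isMinOn ⟨x, hx⟩ hquot
  set c := u z / φ z - w z with hc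
  have htouch : ∀ y ∈ K, φ y * (c + w y) ≤ u y := fun y hy => by
    have hcy : c + w y ≤ u y / φ y := le_sub_iff_add_le.mp (hz hy)
    rwa [le_div_iff₀' (hφpos y hy)] at hcy
  suffices hc₀ : 0 ≤ c from
    (mul_le_mul_of_nonneg_left (le_add_of_nonneg_left hc₀) (hφpos x hx).le).trans (htouch x hx)
  by_contra! hneg
  have heq : φ z * (c + w z) = u z := by
    rw [hc, sub_add_cancel, mul_div_cancel₀ _ (hφpos z hzK).ne']
  have hzint : z ∈ interior K := by
    by_contra hzint
    have hbz : φ z * w z ≤ φ z * (c + w z) :=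
      (hbdry z ⟨subset_closure hzK, hzint⟩).trans_eq heq.symm
    linarith [le_of_mul_le_mul_left hbz (hφpos z hzK)]
  have hnhds := isOpen_interior.mem_nhds hzint
  have hle := ckn_le_of_touching (μ₁ := μ₁) (μ₂ := μ₂) (hu₂.contDiffAt hnhds)
    ((hφ₂.contDiffAt hnhds).mul (contDiffAt_const.add (hw₂.contDiffAt hnhds)))
    (eventually_of_mem (mem_interior_iff_mem_nhds.mp hzint) htouch) heq
  linarith [hsuper z hzint, hsub c hneg z hzint]

end Comparison

section RadialFunctions

variable {V : Type*} [NormedAddCommGroup V] [InnerProductSpace ℝ V]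

lemma hasFDerivAt_norm {x : V} (hx : x ≠ 0) :
    HasFDerivAt (fun y : V => ‖y‖) (‖x‖⁻¹ • innerSL ℝ x) x := by
  have hsqrt := (hasStrictFDerivAt_norm_sq x).hasFDerivAt.sqrt (by simpa using hx)
  simp only [Real.sqrt_sq (norm_nonneg _)] at hsqrt
  refine hsqrt.congr_fderiv (ContinuousLinearMap.ext fun v => ?_)
  simp only [one_div, mul_inv_rev, smul_apply, nsmul_eq_mul, Nat.cast_ofNat, smul_eq_mul]
  ring

lemma fderiv_comp_norm_apply {f : ℝ → ℝ} {f' : ℝ} {x : V} (hf : HasDerivAt f f' ‖x‖)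
    (hx : x ≠ 0) (v : V) :
    fderiv ℝ (fun y : V => f ‖y‖) x v = f' / ‖x‖ * inner ℝ x v := by
  have hcomp : HasFDerivAt (fun y : V => f ‖y‖) (f' • ‖x‖⁻¹ • innerSL ℝ x) x :=
    hf.comp_hasFDerivAt x (hasFDerivAt_norm hx)
  rw [hcomp.fderiv]
  simp [div_eq_mul_inv, mul_assoc]

variable {f f' : ℝ → ℝ} {f'' : ℝ}

lemma fderiv_fderiv_comp_norm_apply {x : V} (hf : ∀ᶠ r in 𝓝 ‖x‖, HasDerivAt f (f' r) r)
    (hf' : HasDerivAt f' f'' ‖x‖) (hx : x ≠ 0) (v : V) :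
    fderiv ℝ (fun y => fderiv ℝ (fun z : V => f ‖z‖) y v) x v =
      (f'' - f' ‖x‖ / ‖x‖) / ‖x‖ ^ 2 * inner ℝ x v ^ 2 + f' ‖x‖ / ‖x‖ * ‖v‖ ^ 2 := by
  have hnorm : ‖x‖ ≠ 0 := norm_ne_zero_iff.mpr hx
  have hfirst : (fun y => fderiv ℝ (fun z : V => f ‖z‖) y v) =ᶠ[𝓝 x]
      fun y => f' ‖y‖ / ‖y‖ * inner ℝ y v := by
    filter_upwards [continuous_norm.continuousAt.eventually hf, isOpen_ne.mem_nhds hx]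
      with y hfy hy using fderiv_comp_norm_apply hfy hy v
  have hquot : HasDerivAt (fun r => f' r / r) ((f'' - f' ‖x‖ / ‖x‖) / ‖x‖) ‖x‖ :=
    (hf'.div (hasDerivAt_id _) hnorm).congr_deriv (by simp only [id]; field_simp)
  have hradial : HasFDerivAt (fun y : V => f' ‖y‖ / ‖y‖) _ x :=
    hquot.comp_hasFDerivAt x (hasFDerivAt_norm hx)
  have hinner : HasFDerivAt (fun y : V => inner ℝ y v) (innerSL ℝ v) x := by
    simp only [real_inner_comm v]
    exact (innerSL ℝ v).hasFDerivAt
  have hsecond : fderiv ℝ (fun y : V => f' ‖y‖ / ‖y‖ * inner ℝ y v) x = _ :=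
    (hradial.mul hinner).fderiv
  rw [hfirst.fderiv_eq, hsecond]
  simp only [add_apply, smul_apply, innerSL_apply_apply, real_inner_self_eq_norm_sq, smul_eq_mul]
  field_simp
  ring

variable {N : ℕ} {x : E N}

lemma lap_comp_norm (hf : ∀ᶠ r in 𝓝 ‖x‖, HasDerivAt f (f' r) r) (hf' : HasDerivAt f' f'' ‖x‖)
    (hx : x ≠ 0) :
    lap N (fun y => f ‖y‖) x = f'' + (N - 1) / ‖x‖ * f' ‖x‖ := by
  have hnorm : ‖x‖ ≠ 0 := norm_ne_zero_iff.mpr hx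
  simp only [lap, fderiv_fderiv_comp_norm_apply hf hf' hx, EuclideanSpace.inner_single_right,
    PiLp.norm_single, Finset.sum_add_distrib, ← Finset.mul_sum, Real.ringHom_apply, one_mul,
    ← EuclideanSpace.real_norm_sq_eq, norm_one, one_pow, Finset.sum_const, Finset.card_univ,
    Fintype.card_fin, nsmul_eq_mul, mul_one]
  field_simp
  ring

lemma ckn_comp_norm {μ₁ μ₂ : ℝ} (hf : ∀ᶠ r in 𝓝 ‖x‖, HasDerivAt f (f' r) r)
    (hf' : HasDerivAt f' f'' ‖x‖) (hx : x ≠ 0) :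
    ckn N μ₁ μ₂ (fun y => f ‖y‖) x =
      -(f'' + (N - 1 - μ₁) / ‖x‖ * f' ‖x‖) + μ₂ / ‖x‖ ^ 2 * f ‖x‖ := by
  have hnorm : ‖x‖ ≠ 0 := norm_ne_zero_iff.mpr hx
  rw [ckn, lap_comp_norm hf hf' hx, fderiv_comp_norm_apply hf.self_of_nhds hx,
    real_inner_self_eq_norm_sq]
  field_simp
  ring

lemma ckn_norm_rpow_mul_comp_norm {μ₁ μ₂ : ℝ} (p : ℝ)
    (hf : ∀ᶠ r in 𝓝 ‖x‖, HasDerivAt f (f' r) r) (hf' : HasDerivAt f' f'' ‖x‖) (hx : x ≠ 0) :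
    ckn N μ₁ μ₂ (fun y => ‖y‖ ^ p * f ‖y‖) x =
      -‖x‖ ^ (p - 2) * ((p ^ 2 + (N - 2 - μ₁) * p - μ₂) * f ‖x‖
        + (2 * p + (N - 1 - μ₁)) * (‖x‖ * f' ‖x‖) + ‖x‖ ^ 2 * f'') := by
  have hnorm : 0 < ‖x‖ := norm_pos_iff.mpr hx
  have hfirst : ∀ᶠ r in 𝓝 ‖x‖, HasDerivAt (fun s => s ^ p * f s)
      (p * r ^ (p - 1) * f r + r ^ p * f' r) r := by
    filter_upwards [hf, lt_mem_nhds hnorm] with r hfr hr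
    exact (Real.hasDerivAt_rpow_const (Or.inl hr.ne')).mul hfr
  have hsecond := (((Real.hasDerivAt_rpow_const (p := p - 1) (Or.inl hnorm.ne')).const_mul p).mul
    hf.self_of_nhds).add ((Real.hasDerivAt_rpow_const (p := p) (Or.inl hnorm.ne')).mul hf')
  rw [ckn_comp_norm hfirst hsecond hx]
  have hpow : ‖x‖ ^ (p - 1) = ‖x‖ ^ (p - 2) * ‖x‖ := by
    rw [← Real.rpow_add_one hnorm.ne']; ring_nf
  have hpow' : ‖x‖ ^ p = ‖x‖ ^ (p - 2) * ‖x‖ ^ 2 := by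
    rw [← Real.rpow_add_natCast hnorm.ne']; norm_num
  rw [show p - 1 - 1 = p - 2 by ring, hpow, hpow']
  field_simp
  ring

end RadialFunctions

section Barrier

variable {N : ℕ} {μ₁ μ₂ : ℝ}

lemma tauMinus_le_tauPlus : tauMinus N μ₁ μ₂ ≤ tauPlus N μ₁ μ₂ := by
  unfold tauMinus tauPlus
  gcongr
  linarith [Real.sqrt_nonneg ((2 - (N : ℝ) + μ₁) ^ 2 + 4 * μ₂)]

lemma tauPlus_add_tauMinus : tauPlus N μ₁ μ₂ + tauMinus N μ₁ μ₂ = 2 - N + μ₁ := by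
  unfold tauPlus tauMinus
  ring

lemma tauPlus_sq_add (hdisc : 0 ≤ (2 - (N : ℝ) + μ₁) ^ 2 + 4 * μ₂) :
    tauPlus N μ₁ μ₂ ^ 2 + (N - 2 - μ₁) * tauPlus N μ₁ μ₂ - μ₂ = 0 := by
  unfold tauPlus
  linear_combination Real.sq_sqrt hdisc / 4

-- The zeroth order term drops out because `‖x‖ ^ τ₊` is itself a solution.
lemma ckn_norm_rpow_tauPlus_mul_comp_norm (hdisc : 0 ≤ (2 - (N : ℝ) + μ₁) ^ 2 + 4 * μ₂)
    {f f' : ℝ → ℝ} {f'' : ℝ} {x : E N} (hf : ∀ᶠ r in 𝓝 ‖x‖, HasDerivAt f (f' r) r)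
    (hf' : HasDerivAt f' f'' ‖x‖) (hx : x ≠ 0) :
    ckn N μ₁ μ₂ (fun y => ‖y‖ ^ tauPlus N μ₁ μ₂ * f ‖y‖) x =
      -‖x‖ ^ (tauPlus N μ₁ μ₂ - 2) *
        ((1 + (tauPlus N μ₁ μ₂ - tauMinus N μ₁ μ₂)) * (‖x‖ * f' ‖x‖) + ‖x‖ ^ 2 * f'') := by
  rw [ckn_norm_rpow_mul_comp_norm _ hf hf' hx, tauPlus_sq_add hdisc]
  linear_combination -‖x‖ ^ (tauPlus N μ₁ μ₂ - 2) * (‖x‖ * f' ‖x‖) *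
    tauPlus_add_tauMinus (N := N) (μ₁ := μ₁) (μ₂ := μ₂)

/-- The profile `w` of the barrier `‖x‖ ^ τ₊ * w ‖x‖`. It equals `t` at `1` and tends to `-∞` at
`0`. When `τ₋ = τ₊` the product `‖x‖ ^ τ₊ * log ‖x‖` is an exact solution, and it is the
term `r ^ 2` that makes the subsolution strict. -/
def logBarrier (t ε r : ℝ) : ℝ := t + ε * (Real.log r + r ^ 2 - 1)

lemma logBarrier_one (t ε : ℝ) : logBarrier t ε 1 = t := by
  simp [logBarrier]

lemma hasDerivAt_logBarrier {r : ℝ} (t ε : ℝ) (hr : r ≠ 0) :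
    HasDerivAt (logBarrier t ε) (ε * (r⁻¹ + 2 * r)) r := by
  have hsq : HasDerivAt (fun s : ℝ => s ^ 2) (2 * r) r := by simpa using hasDerivAt_pow 2 r
  exact ((((Real.hasDerivAt_log hr).add hsq).sub_const 1).const_mul ε).const_add t

lemma contDiffAt_logBarrier {r : ℝ} (t ε : ℝ) (hr : r ≠ 0) {n : WithTop ℕ∞} :
    ContDiffAt ℝ n (logBarrier t ε) r :=
  contDiffAt_const.add (contDiffAt_const.mul
    (((Real.contDiffAt_log.mpr hr).add (contDiffAt_id.pow 2)).sub contDiffAt_const))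

lemma tendsto_logBarrier_nhdsGT_zero (t : ℝ) {ε : ℝ} (hε : 0 < ε) :
    Tendsto (logBarrier t ε) (𝓝[>] 0) atBot := by
  have hsq : Tendsto (fun r : ℝ => r ^ 2 - 1) (𝓝[>] 0) (𝓝 (0 ^ 2 - 1)) :=
    (Continuous.tendsto (by fun_prop) 0).mono_left nhdsWithin_le_nhds
  have hsum := (Real.tendsto_log_nhdsGT_zero.atBot_add hsq).const_mul_atBot hε
  exact (tendsto_atBot_add_const_left _ t hsum).congr fun r => by
    simp only [logBarrier, add_sub_assoc]

lemma ckn_norm_rpow_tauPlus_mul_logBarrier_neg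
    (hdisc : 0 ≤ (2 - (N : ℝ) + μ₁) ^ 2 + 4 * μ₂) (t : ℝ) {ε : ℝ} (hε : 0 < ε) {x : E N}
    (hx : x ≠ 0) :
    ckn N μ₁ μ₂ (fun y => ‖y‖ ^ tauPlus N μ₁ μ₂ * logBarrier t ε ‖y‖) x < 0 := by
  have hnorm : 0 < ‖x‖ := norm_pos_iff.mpr hx
  have hfirst : ∀ᶠ r in 𝓝 ‖x‖, HasDerivAt (logBarrier t ε) (ε * (r⁻¹ + 2 * r)) r :=
    (eventually_ne_nhds hnorm.ne').mono fun r hr => hasDerivAt_logBarrier t ε hr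
  have hsecond : HasDerivAt (fun r : ℝ => ε * (r⁻¹ + 2 * r)) (ε * (-(‖x‖ ^ 2)⁻¹ + 2)) ‖x‖ := by
    simpa using ((hasDerivAt_inv hnorm.ne').add ((hasDerivAt_id ‖x‖).const_mul 2)).const_mul ε
  rw [ckn_norm_rpow_tauPlus_mul_comp_norm hdisc hfirst hsecond hx]
  have hgap : 0 ≤ tauPlus N μ₁ μ₂ - tauMinus N μ₁ μ₂ := sub_nonneg.mpr tauMinus_le_tauPlus
  generalize tauPlus N μ₁ μ₂ - tauMinus N μ₁ μ₂ = gap at hgap ⊢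
  have hvalue : (1 + gap) * (‖x‖ * (ε * (‖x‖⁻¹ + 2 * ‖x‖)))
      + ‖x‖ ^ 2 * (ε * (-(‖x‖ ^ 2)⁻¹ + 2)) =
      ε * (gap * (1 + 2 * ‖x‖ ^ 2) + 4 * ‖x‖ ^ 2) := by
    field_simp
    ring
  rw [hvalue, neg_mul, neg_lt_zero]
  positivity

end Barrier

section PuncturedBall

variable {N : ℕ} {μ₁ μ₂ t : ℝ} {u : E N → ℝ}

lemma isCompact_norm_preimage_Icc (δ R : ℝ) : IsCompact ((norm : E N → ℝ) ⁻¹' Icc δ R) :=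
  (isCompact_closedBall 0 R).of_isClosed_subset (isClosed_Icc.preimage continuous_norm)
    fun _ hx => mem_closedBall_zero_iff.mpr hx.2

lemma interior_norm_preimage_Icc_subset (δ : ℝ) {R : ℝ} (hR : R ≠ 0) :
    interior ((norm : E N → ℝ) ⁻¹' Icc δ R) ⊆ ball 0 R := by
  rw [← interior_closedBall _ hR]
  exact interior_mono fun _ hx => mem_closedBall_zero_iff.mpr hx.2

lemma norm_eq_or_eq_of_mem_frontier_norm_preimage_Icc {δ R : ℝ} (hδR : δ ≤ R) {x : E N}
    (hx : x ∈ frontier ((norm : E N → ℝ) ⁻¹' Icc δ R)) : ‖x‖ = δ ∨ ‖x‖ = R := by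
  have hfrontier : ‖x‖ ∈ frontier (Icc δ R) := continuous_norm.frontier_preimage_subset _ hx
  rwa [frontier_Icc hδR] at hfrontier

lemma norm_rpow_tauPlus_mul_logBarrier_le_of_frontier
    (hdisc : 0 ≤ (2 - (N : ℝ) + μ₁) ^ 2 + 4 * μ₂) {ε : ℝ} (hε : 0 < ε) {K : Set (E N)}
    (hK : IsCompact K) (h0 : K ⊆ {0}ᶜ) (hcont : ContinuousOn u K)
    (hreg : ContDiffOn ℝ 2 u (interior K)) (hsuper : ∀ y ∈ interior K, 0 ≤ ckn N μ₁ μ₂ u y)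
    (hbdry : ∀ y ∈ frontier K, ‖y‖ ^ tauPlus N μ₁ μ₂ * logBarrier t ε ‖y‖ ≤ u y) {x : E N}
    (hx : x ∈ K) :
    ‖x‖ ^ tauPlus N μ₁ μ₂ * logBarrier t ε ‖x‖ ≤ u x := by
  have hpow : ContDiffOn ℝ 2 (fun y : E N => ‖y‖ ^ tauPlus N μ₁ μ₂) {0}ᶜ := fun y hy =>
    ((contDiffAt_norm ℝ hy).rpow_const_of_ne (norm_ne_zero_iff.mpr hy)).contDiffWithinAt
  have hbarrier : ContDiffOn ℝ 2 (fun y : E N => logBarrier t ε ‖y‖) {0}ᶜ := fun y hy =>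
    ((contDiffAt_logBarrier t ε (norm_ne_zero_iff.mpr hy)).comp y
      (contDiffAt_norm ℝ hy)).contDiffWithinAt
  have hint : interior K ⊆ {0}ᶜ := interior_subset.trans h0
  refine mul_le_of_ckn_mul_const_add_neg hK hcont hreg (hpow.continuousOn.mono h0)
    (hpow.mono hint) (fun y hy => Real.rpow_pos_of_pos (norm_pos_iff.mpr (h0 hy)) _)
    (hbarrier.continuousOn.mono h0) (hbarrier.mono hint) hsuper (fun c _ y hy => ?_) hbdry hx
  simpa only [logBarrier, add_assoc] using
    ckn_norm_rpow_tauPlus_mul_logBarrier_neg hdisc (c + t) hε (hint hy)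

lemma norm_rpow_tauPlus_mul_logBarrier_le (hdisc : 0 ≤ (2 - (N : ℝ) + μ₁) ^ 2 + 4 * μ₂)
    (hcont : ContinuousOn u (closedBall 0 1 \ {0})) (hreg : ContDiffOn ℝ 2 u (ball 0 1 \ {0}))
    (hnonneg : ∀ y ∈ ball 0 1 \ {0}, 0 ≤ u y)
    (hsuper : ∀ y ∈ ball 0 1 \ {0}, 0 ≤ ckn N μ₁ μ₂ u y)
    (hbdry : ∀ y ∈ sphere 0 1, t ≤ u y) {ε : ℝ} (hε : 0 < ε) {x : E N}
    (hx : x ∈ ball 0 1 \ {0}) :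
    ‖x‖ ^ tauPlus N μ₁ μ₂ * logBarrier t ε ‖x‖ ≤ u x := by
  have hx₁ : ‖x‖ < 1 := mem_ball_zero_iff.mp hx.1
  obtain ⟨δ, hbarrier, hδx, hδ⟩ : ∃ δ, logBarrier t ε δ ≤ 0 ∧ δ < ‖x‖ ∧ 0 < δ :=
    (((tendsto_logBarrier_nhdsGT_zero t hε).eventually (eventually_le_atBot 0)).and
      ((eventually_nhdsWithin_of_eventually_nhds (gt_mem_nhds (norm_pos_iff.mpr hx.2))).and
        eventually_mem_nhdsWithin)).exists
  set K : Set (E N) := norm ⁻¹' Icc δ 1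
  have hK₀ : K ⊆ {0}ᶜ := fun y hy => norm_pos_iff.mp (hδ.trans_le hy.1)
  have hK₁ : K ⊆ closedBall 0 1 \ {0} := fun y hy =>
    ⟨mem_closedBall_zero_iff.mpr hy.2, hK₀ hy⟩
  have hint : interior K ⊆ ball 0 1 \ {0} := fun y hy =>
    ⟨interior_norm_preimage_Icc_subset δ one_ne_zero hy, hK₀ (interior_subset hy)⟩
  refine norm_rpow_tauPlus_mul_logBarrier_le_of_frontier hdisc hε (isCompact_norm_preimage_Icc δ 1)
    hK₀ (hcont.mono hK₁) (hreg.mono hint) (fun y hy => hsuper y (hint hy)) (fun y hy => ?_)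
    ⟨hδx.le, hx₁.le⟩
  have hδ₁ : δ < 1 := hδx.trans hx₁
  rcases norm_eq_or_eq_of_mem_frontier_norm_preimage_Icc hδ₁.le hy with hinner | houter
  · have hyball : y ∈ ball 0 1 \ {0} := ⟨mem_ball_zero_iff.mpr (hinner.trans_lt hδ₁),
      norm_pos_iff.mp (hδ.trans_eq hinner.symm)⟩
    rw [hinner]
    exact (mul_nonpos_of_nonneg_of_nonpos (by positivity) hbarrier).trans (hnonneg y hyball)
  · rw [houter, Real.one_rpow, one_mul, logBarrier_one]
    exact hbdry y (mem_sphere_zero_iff_norm.mpr houter)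

end PuncturedBall

theorem stmt14_general (N : ℕ) (μ₁ μ₂ : ℝ) (hdisc : 0 ≤ (2 - (N : ℝ) + μ₁) ^ 2 + 4 * μ₂)
    (u : E N → ℝ) (t : ℝ) (hcont : ContinuousOn u (closedBall 0 1 \ {0}))
    (hreg : ContDiffOn ℝ 2 u (ball 0 1 \ {0})) (hnonneg : ∀ x ∈ ball 0 1 \ {0}, 0 ≤ u x)
    (hsuper : ∀ x ∈ ball 0 1 \ {0}, 0 ≤ ckn N μ₁ μ₂ u x) (hbdry : ∀ x ∈ sphere 0 1, t ≤ u x) :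
    ∀ x ∈ ball 0 1 \ {0}, t * ‖x‖ ^ tauPlus N μ₁ μ₂ ≤ u x := by
  intro x hx
  have hlim : Tendsto (fun ε : ℝ => ‖x‖ ^ tauPlus N μ₁ μ₂ * logBarrier t ε ‖x‖) (𝓝[>] 0)
      (𝓝 (t * ‖x‖ ^ tauPlus N μ₁ μ₂)) := by
    refine (Continuous.tendsto' ?_ 0 _ ?_).mono_left nhdsWithin_le_nhds
    · unfold logBarrier
      fun_prop
    · simp [logBarrier, mul_comm]
  exact le_of_tendsto hlim (eventually_mem_nhdsWithin.mono fun ε hε =>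
    norm_rpow_tauPlus_mul_logBarrier_le hdisc hcont hreg hnonneg hsuper hbdry hε hx)

/-- a positive supersolution of `ℒ_{μ₁,μ₂} u ≥ 0` in the punctured
unit ball with `u ≥ t₁` on the unit sphere dominates `t₁(|x|^{τ₊} - 1)`. -/
theorem stmt14 (N : ℕ) (hN : 3 ≤ N) (μ₁ μ₂ : ℝ) (hμ₁ : μ₁ < (N : ℝ) - 2)
    (hμ₂l : -((N : ℝ) - 2 - μ₁) ^ 2 / 4 ≤ μ₂) (hμ₂u : μ₂ < 0)
    (u : E N → ℝ) (t₁ : ℝ) (ht₁ : 0 < t₁)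
    (hreg : ContDiffOn ℝ 2 u (closure (ball (0 : E N) 1) \ {0}))
    (hpos : ∀ x ∈ closure (ball (0 : E N) 1) \ {0}, 0 < u x)
    (hsuper : ∀ x ∈ ball (0 : E N) 1 \ {0}, 0 ≤ ckn N μ₁ μ₂ u x)
    (hbdry : ∀ x ∈ sphere (0 : E N) 1, t₁ ≤ u x) :
    ∀ x ∈ ball (0 : E N) 1 \ {0}, t₁ * (‖x‖ ^ tauPlus N μ₁ μ₂ - 1) ≤ u x := fun x hx =>
  (mul_le_mul_of_nonneg_left (sub_le_self _ zero_le_one) ht₁.le).trans <|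
    stmt14_general N μ₁ μ₂ (by linarith) u t₁
      (closure_ball (0 : E N) one_ne_zero ▸ hreg.continuousOn)
      (hreg.mono (sdiff_subset_sdiff_left subset_closure))
      (fun y hy => (hpos y ⟨subset_closure hy.1, hy.2⟩).le) hsuper hbdry x hx
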